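/- The group G₂₉ has order 7680. -/

import Mathlib

open Matrix Complex

/-- The generator `s₁ = diag(1,1,1,-1)` of Mukai's group `G₂₉`. -/
def s1 : Matrix (Fin 4) (Fin 4) ℂ := !![1,0,0,0; 0,1,0,0; 0,0,1,0; 0,0,0,-1]

/-- The generator `s₂ = (1/2)·[[1,1,i,i],[1,1,-i,-i],[-i,i,1,-1],[-i,i,-1,1]]` of `G₂₉`. -/
noncomputable def s2 : Matrix (Fin 4) (Fin 4) ℂ :=
  (1/2 : ℂ) • !![1, 1, I, I; 1, 1, -I, -I; -I, I, 1, -1; -I, I, -1, 1]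

/-- The generator `s₃` (the transposition of the first two coordinates) of `G₂₉`. -/
def s3 : Matrix (Fin 4) (Fin 4) ℂ := !![0,1,0,0; 1,0,0,0; 0,0,1,0; 0,0,0,1]

/-- The generator `s₄` (the transposition of the middle two coordinates) of `G₂₉`. -/
def s4 : Matrix (Fin 4) (Fin 4) ℂ := !![1,0,0,0; 0,0,1,0; 0,1,0,0; 0,0,0,1]

/-- Mukai's group `G₂₉` (the Shephard–Todd group `G_29`): the subgroup of `GL(4,ℂ)`
generated by `s₁`, `s₂`, `s₃`, `s₄`. -/
def G29 : Subgroup (GL (Fin 4) ℂ) :=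
  Subgroup.closure
    {g | (↑g : Matrix (Fin 4) (Fin 4) ℂ) ∈ ({s1, s2, s3, s4} : Set (Matrix (Fin 4) (Fin 4) ℂ))}


namespace G29Proof

set_option synthInstance.maxSize 2000
set_option synthInstance.maxHeartbeats 400000

/-- Vectors over the Gaussian integers, as pairs (real part, imaginary part). -/
abbrev V := (ℤ × ℤ) × (ℤ × ℤ) × (ℤ × ℤ) × (ℤ × ℤ)

/-- The complex number of a Gaussian integer. -/
noncomputable def gc (z : ℤ × ℤ) : ℂ := (z.1 : ℂ) + (z.2 : ℂ) * I

/-- The complex vector of a Gaussian integer vector. -/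
noncomputable def toC (v : V) : Fin 4 → ℂ := ![gc v.1, gc v.2.1, gc v.2.2.1, gc v.2.2.2]

/-- Multiplication by `i`. -/
def mi (z : ℤ × ℤ) : ℤ × ℤ := (-z.2, z.1)

/-- Halving a Gaussian integer. -/
def hf (z : ℤ × ℤ) : ℤ × ℤ := (z.1 / 2, z.2 / 2)

/-- Twice the action of `s2`. -/
def b2 (v : V) : V :=
  (v.1 + v.2.1 + mi v.2.2.1 + mi v.2.2.2,
   v.1 + v.2.1 - mi v.2.2.1 - mi v.2.2.2,
   mi v.2.1 - mi v.1 + v.2.2.1 - v.2.2.2,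
   mi v.2.1 - mi v.1 - v.2.2.1 + v.2.2.2)

def act0 (v : V) : V := (v.1, v.2.1, v.2.2.1, -v.2.2.2)
def act1 (v : V) : V := (hf (b2 v).1, hf (b2 v).2.1, hf (b2 v).2.2.1, hf (b2 v).2.2.2)
def act2 (v : V) : V := (v.2.1, v.1, v.2.2.1, v.2.2.2)
def act3 (v : V) : V := (v.1, v.2.2.1, v.2.1, v.2.2.2)

/-- The action of the generators on Gaussian integer vectors. -/
def act (i : Fin 4) : V → V := ![act0, act1, act2, act3] i

def units : List (ℤ × ℤ) := [(1, 0), (0, 1), (-1, 0), (0, -1)]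

/-- The 160 root vectors. -/
def roots : List V :=
  (units.flatMap fun u =>
    let d := u + u
    let p := u + mi u
    [(d, 0, 0, 0), (0, d, 0, 0), (0, 0, d, 0), (0, 0, 0, d)] ++
    [p, -p].flatMap fun q =>
      [(p, q, 0, 0), (p, 0, q, 0), (p, 0, 0, q), (0, p, q, 0), (0, p, 0, q), (0, 0, p, q)]) ++
  ([(1, 0), (-1, 0)].flatMap fun a => [(1, 0), (-1, 0)].flatMap fun b =>
    [(0, 1), (0, -1)].flatMap fun c => [(0, 1), (0, -1)].flatMap fun d =>
      [(a, b, c, d), (a, c, b, d), (a, c, d, b), (c, a, b, d), (c, a, d, b), (c, d, a, b)])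

def e1 : V := ((2, 0), 0, 0, 0)
def e2 : V := (0, (2, 0), 0, 0)
def e3 : V := (0, 0, (2, 0), 0)
def e4 : V := (0, 0, 0, (2, 0))

/-- The action of a word in the generators. -/
def wact (l : List (Fin 4)) (v : V) : V := l.foldr act v

/-- Words whose subset products move `e4` to every root. -/
def ws : List (List (Fin 4)) :=
  [[1], [1, 3, 0], [0, 3], [1, 0, 2, 1, 2], [2, 3, 2, 0, 1], [1, 3], [2, 1, 0, 3, 2],
   [3, 1, 0], [2, 0, 1, 1]]

def reach : List V := ws.foldl (fun L w => L ++ L.map (wact w)) [e4]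

theorem roots_length : roots.length = 160 := by decide +kernel

theorem roots_nodup : roots.Nodup := by decide +kernel

theorem roots_reach : ∀ v ∈ roots, v ∈ reach := by decide +kernel

theorem roots_act : ∀ v ∈ roots, ∀ i, act i v ∈ roots := by decide +kernel

theorem roots_half : ∀ v ∈ roots, b2 v = act 1 v + act 1 v := by decide +kernel

/-- Multiplication of a vector by `1 + i`. -/
def m1i (v : V) : V :=
  (v.1 + mi v.1, v.2.1 + mi v.2.1, v.2.2.1 + mi v.2.2.1, v.2.2.2 + mi v.2.2.2)

def vmi (v : V) : V := (mi v.1, mi v.2.1, mi v.2.2.1, mi v.2.2.2)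

theorem key : ∀ w ∈ roots, (∃ u ∈ roots, m1i (w + e4) = u + u) →
    w ∈ [e1, -e1, e2, -e2, e3, -e3, vmi e4, -vmi e4] := by decide +kernel

theorem key_root : ∀ v ∈ [e1, e2, e3], ∃ u ∈ roots, m1i (v + e4) = u + u := by decide +kernel

theorem gc_inj {a b : ℤ × ℤ} (h : gc a = gc b) : a = b := by
  have h1 := congrArg Complex.re h
  have h2 := congrArg Complex.im h
  simp [gc] at h1 h2
  exact Prod.ext h1 h2

theorem toC_inj : Function.Injective toC := by
  intro v w h
  have h0 := congrFun h 0
  have h1 := congrFun h 1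
  have h2 := congrFun h 2
  have h3 := congrFun h 3
  simp [toC] at h0 h1 h2 h3
  exact Prod.ext (gc_inj h0) (Prod.ext (gc_inj h1) (Prod.ext (gc_inj h2) (gc_inj h3)))

theorem gc_add (a b : ℤ × ℤ) : gc (a + b) = gc a + gc b := by
  simp [gc]; ring

theorem gc_neg (a : ℤ × ℤ) : gc (-a) = -gc a := by
  simp [gc]; ring

theorem gc_sub (a b : ℤ × ℤ) : gc (a - b) = gc a - gc b := by
  simp [gc]; ring

theorem gc_mi (a : ℤ × ℤ) : gc (mi a) = I * gc a := by
  simp [gc, mi]; ring_nf; simp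

theorem toC_add (v w : V) : toC (v + w) = toC v + toC w := by
  ext i; fin_cases i <;> simp [toC, gc_add]

theorem toC_neg (v : V) : toC (-v) = -toC v := by
  ext i; fin_cases i <;> simp [toC, gc_neg]

theorem toC_vmi (v : V) : toC (vmi v) = I • toC v := by
  ext i; fin_cases i <;> simp [toC, vmi, gc_mi]

theorem toC_m1i (v : V) : toC (m1i v) = (1 + I) • toC v := by
  ext i; fin_cases i <;> simp [toC, m1i, gc_mi, gc_add] <;> ring

theorem toC_b2 (v : V) : (2 : ℂ) • (s2 *ᵥ toC v) = toC (b2 v) := by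
  ext i; fin_cases i <;>
    simp [toC, b2, s2, gc_mi, gc_add, gc_sub] <;> ring

/-- The generator matrices. -/
noncomputable def gm : Fin 4 → Matrix (Fin 4) (Fin 4) ℂ := ![s1, s2, s3, s4]

theorem gm_sq (i : Fin 4) : gm i * gm i = 1 := by
  fin_cases i <;> ext a b <;> fin_cases a <;> fin_cases b <;>
    simp [gm, s1, s2, s3, s4, Matrix.mul_apply, Fin.sum_univ_four] <;> ring_nf <;> simp <;> ring

noncomputable def gen (i : Fin 4) : GL (Fin 4) ℂ := ⟨gm i, gm i, gm_sq i, gm_sq i⟩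

theorem gen_mem (i : Fin 4) : gen i ∈ G29 := by
  apply Subgroup.subset_closure
  fin_cases i <;> simp [gen, gm]

theorem gen_inv (i : Fin 4) : (gen i)⁻¹ = gen i := by
  rw [inv_eq_iff_mul_eq_one]
  exact Units.ext (gm_sq i)

theorem gm_act (i : Fin 4) (v : V) (hv : v ∈ roots) : gm i *ᵥ toC v = toC (act i v) := by
  have h2 : s2 *ᵥ toC v = toC (act 1 v) := by
    have h := toC_b2 v
    rw [roots_half v hv, toC_add, ← two_smul ℂ (toC _)] at h
    exact smul_right_injective _ (two_ne_zero' ℂ) h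
  fin_cases i
  · ext j; fin_cases j <;>
      simp [gm, s1, toC, act, act0, gc_neg, Matrix.mulVec, dotProduct, Fin.sum_univ_four]
  · exact h2
  · ext j; fin_cases j <;>
      simp [gm, s3, toC, act, act2, Matrix.mulVec, dotProduct, Fin.sum_univ_four]
  · ext j; fin_cases j <;>
      simp [gm, s4, toC, act, act3, Matrix.mulVec, dotProduct, Fin.sum_univ_four]

/-- Complex column vectors, with the action of `GL(4,ℂ)`. -/
def Vec := Fin 4 → ℂ

noncomputable instance : MulAction (GL (Fin 4) ℂ) Vec where
  smul g v := (g : Matrix (Fin 4) (Fin 4) ℂ) *ᵥ (v : Fin 4 → ℂ)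
  one_smul v := Matrix.one_mulVec (v : Fin 4 → ℂ)
  mul_smul g h v := (Matrix.mulVec_mulVec (v : Fin 4 → ℂ) g.1 h.1).symm

noncomputable def tv (v : V) : Vec := toC v

theorem smul_def' (g : GL (Fin 4) ℂ) (v : V) :
    g • tv v = ((g : Matrix (Fin 4) (Fin 4) ℂ) *ᵥ toC v : Fin 4 → ℂ) := rfl

theorem tv_inj : Function.Injective tv := toC_inj

theorem gen_act (i : Fin 4) (v : V) (hv : v ∈ roots) : gen i • tv v = tv (act i v) :=
  gm_act i v hv

/-- Every element of the group permutes the roots. -/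
theorem preserves {g : GL (Fin 4) ℂ} (hg : g ∈ G29) :
    ∀ v ∈ roots, ∃ w ∈ roots, g • tv v = tv w := by
  suffices h : (∀ v ∈ roots, ∃ w ∈ roots, g • tv v = tv w) ∧
      (∀ v ∈ roots, ∃ w ∈ roots, g⁻¹ • tv v = tv w) from h.1
  unfold G29 at hg
  induction hg using Subgroup.closure_induction with
  | mem x hx =>
    have : ∃ i, x = gen i := by
      rcases hx with h | h | h | h
      exacts [⟨0, Units.ext h⟩, ⟨1, Units.ext h⟩, ⟨2, Units.ext h⟩, ⟨3, Units.ext h⟩]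
    obtain ⟨i, rfl⟩ := this
    rw [gen_inv]
    exact ⟨fun v hv => ⟨_, roots_act v hv i, gen_act i v hv⟩,
      fun v hv => ⟨_, roots_act v hv i, gen_act i v hv⟩⟩
  | one => exact ⟨fun v hv => ⟨v, hv, one_smul _ _⟩,
      fun v hv => ⟨v, hv, by rw [inv_one, one_smul]⟩⟩
  | mul x y _ _ hx hy =>
    constructor
    · intro v hv
      obtain ⟨w, hw, e⟩ := hy.1 v hv
      obtain ⟨u, hu, e'⟩ := hx.1 w hw
      exact ⟨u, hu, by rw [mul_smul, e, e']⟩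
    · intro v hv
      obtain ⟨w, hw, e⟩ := hx.2 v hv
      obtain ⟨u, hu, e'⟩ := hy.2 w hw
      exact ⟨u, hu, by rw [_root_.mul_inv_rev, mul_smul, e, e']⟩
  | inv x _ hx => exact ⟨hx.2, by simpa using hx.1⟩

/-- The group element of a word. -/
noncomputable def wgen (l : List (Fin 4)) : GL (Fin 4) ℂ := (l.map gen).prod

theorem wgen_mem (l : List (Fin 4)) : wgen l ∈ G29 := by
  apply Subgroup.list_prod_mem
  intro x hx
  obtain ⟨i, _, rfl⟩ := List.mem_map.1 hx
  exact gen_mem i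

theorem wgen_act (l : List (Fin 4)) (v : V) (hv : v ∈ roots) :
    wact l v ∈ roots ∧ wgen l • tv v = tv (wact l v) := by
  induction l with
  | nil => exact ⟨hv, by simp [wgen, wact]⟩
  | cons i l ih =>
    refine ⟨roots_act _ ih.1 i, ?_⟩
    have : wgen (i :: l) = gen i * wgen l := by simp [wgen]
    rw [this, mul_smul, ih.2, gen_act _ _ ih.1]
    rfl

theorem reach_aux (W : List (List (Fin 4))) (L : List V)
    (hL : ∀ v ∈ L, v ∈ roots ∧ ∃ g ∈ G29, g • tv e4 = tv v) :
    ∀ v ∈ W.foldl (fun L w => L ++ L.map (wact w)) L, ∃ g ∈ G29, g • tv e4 = tv v := by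
  induction W generalizing L with
  | nil => exact fun v hv => (hL v hv).2
  | cons w W ih =>
    apply ih
    intro v hv
    rcases List.mem_append.1 hv with h | h
    · exact hL v h
    · obtain ⟨u, hu, rfl⟩ := List.mem_map.1 h
      obtain ⟨h1, g, hg, e⟩ := hL u hu
      have := wgen_act w u h1
      exact ⟨this.1, wgen w * g, mul_mem (wgen_mem w) hg, by rw [mul_smul, e, this.2]⟩

theorem basis_mem : e1 ∈ roots ∧ e2 ∈ roots ∧ e3 ∈ roots ∧ e4 ∈ roots ∧
    -e1 ∈ roots ∧ -e2 ∈ roots ∧ -e3 ∈ roots := by decide +kernel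

theorem transitive (v : V) (hv : v ∈ roots) : ∃ g ∈ G29, g • tv e4 = tv v := by
  refine reach_aux ws [e4] ?_ v (roots_reach v hv)
  intro u hu
  rw [List.mem_singleton.1 hu]
  exact ⟨basis_mem.2.2.2.1, 1, one_mem _, one_smul _ _⟩

/-- One step of the stabilizer chain. -/
theorem chain (K : Subgroup (GL (Fin 4) ℂ)) (x : V) (X : Finset V)
    (h1 : ∀ g ∈ K, ∃ w ∈ X, g • tv x = tv w) (h2 : ∀ w ∈ X, ∃ g ∈ K, g • tv x = tv w) :
    Nat.card K =
      Nat.card (K ⊓ MulAction.stabilizer (GL (Fin 4) ℂ) (tv x) : Subgroup (GL (Fin 4) ℂ)) *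
        X.card := by
  have ho : MulAction.orbit K (tv x) = tv '' (X : Set V) := by
    ext y
    constructor
    · rintro ⟨g, rfl⟩
      obtain ⟨w, hw, e⟩ := h1 g.1 g.2
      exact ⟨w, hw, e.symm⟩
    · rintro ⟨w, hw, rfl⟩
      obtain ⟨g, hg, e⟩ := h2 w hw
      exact ⟨⟨g, hg⟩, e⟩
  have hi := MulAction.index_stabilizer K (tv x)
  rw [ho, Set.ncard_image_of_injective _ tv_inj, Set.ncard_coe_finset] at hi
  rw [← (MulAction.stabilizer K (tv x)).card_mul_index, hi]
  congr 1
  have hs : MulAction.stabilizer K (tv x) =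
      (MulAction.stabilizer (GL (Fin 4) ℂ) (tv x)).subgroupOf K := by
    ext g; rfl
  rw [hs, ← Subgroup.inf_subgroupOf_left]
  exact Nat.card_congr (Subgroup.subgroupOfEquivOfLe inf_le_left).toEquiv

theorem smul_neg' (g : GL (Fin 4) ℂ) (v : V) (w : V) (h : g • tv v = tv w) :
    g • tv (-v) = tv (-w) := by
  rw [smul_def'] at h ⊢
  rw [toC_neg, Matrix.mulVec_neg, h]
  exact (toC_neg w).symm

theorem smul_vmi (g : GL (Fin 4) ℂ) (v : V) (w : V) (h : g • tv v = tv w) :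
    g • tv (vmi v) = tv (vmi w) := by
  rw [smul_def'] at h ⊢
  rw [toC_vmi, Matrix.mulVec_smul, h]
  exact (toC_vmi w).symm

theorem image_ne {g : GL (Fin 4) ℂ} {v w a b : V} (h : g • tv v = tv w) (h' : g • tv a = tv b)
    (hne : v ≠ a) : w ≠ b := by
  rintro rfl
  exact hne (tv_inj (MulAction.injective g (h.trans h'.symm)))

/-- An element fixing `e4` moves the other basis vectors among themselves, up to sign. -/
theorem stab_image {g : GL (Fin 4) ℂ} (hg : g ∈ G29) (h4 : g • tv e4 = tv e4) (v : V)
    (hv : v ∈ [e1, e2, e3]) :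
    ∃ w ∈ [e1, -e1, e2, -e2, e3, -e3], g • tv v = tv w := by
  have hr : ∀ v ∈ [e1, e2, e3], v ∈ roots ∧ v ≠ vmi e4 ∧ v ≠ - vmi e4 := by decide +kernel
  obtain ⟨hvr, hn1, hn2⟩ := hr v hv
  obtain ⟨w, hw, e⟩ := preserves hg v hvr
  obtain ⟨u, hu, eu⟩ := key_root v hv
  obtain ⟨u', hu', eu'⟩ := preserves hg u hu
  have hk := key w hw ⟨u', hu', by
    apply toC_inj
    rw [smul_def'] at e h4 eu'
    change _ = toC _ at e h4 eu'
    have := congrArg (fun x => (g : Matrix (Fin 4) (Fin 4) ℂ) *ᵥ toC x) eu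
    simp only [toC_m1i, toC_add, Matrix.mulVec_add, Matrix.mulVec_smul, e, h4, eu'] at this
    rw [toC_m1i, toC_add, toC_add]
    exact this⟩
  have a1 := image_ne e (smul_vmi g _ _ h4) hn1
  have a2 := image_ne e (smul_neg' g _ _ (smul_vmi g _ _ h4)) hn2
  refine ⟨w, ?_, e⟩
  simp only [List.mem_cons, List.not_mem_nil, or_false] at hk ⊢
  tauto

/-- A word for the reflection `diag(1,1,-1,1)`. -/
def dw : List (Fin 4) := [1, 2, 1, 0, 1, 2, 1]

noncomputable abbrev fixer (v : V) : Subgroup (GL (Fin 4) ℂ) := MulAction.stabilizer (GL (Fin 4) ℂ) (tv v)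

theorem word_fix (l : List (Fin 4)) (v : V) (hv : v ∈ roots) (h : wact l v = v) :
    wgen l ∈ fixer v := by
  rw [MulAction.mem_stabilizer_iff, (wgen_act l v hv).2, h]

theorem card1 : Nat.card G29 = Nat.card (G29 ⊓ fixer e4 : Subgroup _) * 160 := by
  rw [chain G29 e4 roots.toFinset, List.toFinset_card_of_nodup roots_nodup, roots_length]
  · intro g hg
    simpa using preserves hg e4 basis_mem.2.2.2.1
  · intro w hw
    exact transitive w (by simpa using hw)

theorem card2 : Nat.card (G29 ⊓ fixer e4 : Subgroup _) =
    Nat.card (G29 ⊓ fixer e4 ⊓ fixer e1 : Subgroup _) * 6 := by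
  rw [chain (G29 ⊓ fixer e4) e1 [e1, -e1, e2, -e2, e3, -e3].toFinset]
  · congr 1
  · intro g hg
    simpa only [List.mem_toFinset] using stab_image hg.1 hg.2 e1 (by simp)
  · have hw : ∀ w ∈ [e1, -e1, e2, -e2, e3, -e3].toFinset,
        ∃ l ∈ [[], [2], [3, 2], dw ++ [3, 2], 3 :: dw ++ [3, 2], 2 :: 3 :: dw ++ [3, 2]],
          wact l e4 = e4 ∧ wact l e1 = w := by decide +kernel
    intro w h
    obtain ⟨l, -, h4, h1⟩ := hw w h
    exact ⟨wgen l, ⟨wgen_mem l, word_fix l _ basis_mem.2.2.2.1 h4⟩,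
      by rw [(wgen_act l _ basis_mem.1).2, h1]⟩

theorem card3 : Nat.card (G29 ⊓ fixer e4 ⊓ fixer e1 : Subgroup _) =
    Nat.card (G29 ⊓ fixer e4 ⊓ fixer e1 ⊓ fixer e2 : Subgroup _) * 4 := by
  rw [chain (G29 ⊓ fixer e4 ⊓ fixer e1) e2 [e2, -e2, e3, -e3].toFinset]
  · congr 1
  · intro g hg
    obtain ⟨w, hw, e⟩ := stab_image hg.1.1 hg.1.2 e2 (by simp)
    have a1 := image_ne e hg.2 (by decide)
    have a2 := image_ne e (smul_neg' g _ _ hg.2) (by decide)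
    refine ⟨w, ?_, e⟩
    simp only [List.mem_toFinset, List.mem_cons, List.not_mem_nil, or_false] at hw ⊢
    tauto
  · have hw : ∀ w ∈ [e2, -e2, e3, -e3].toFinset,
        ∃ l ∈ [[], [3], dw ++ [3], 3 :: dw ++ [3]],
          wact l e4 = e4 ∧ wact l e1 = e1 ∧ wact l e2 = w := by decide +kernel
    intro w h
    obtain ⟨l, -, h4, h1, h2⟩ := hw w h
    exact ⟨wgen l, ⟨⟨wgen_mem l, word_fix l _ basis_mem.2.2.2.1 h4⟩,
      word_fix l _ basis_mem.1 h1⟩, by rw [(wgen_act l _ basis_mem.2.1).2, h2]⟩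

theorem card4 : Nat.card (G29 ⊓ fixer e4 ⊓ fixer e1 ⊓ fixer e2 : Subgroup _) =
    Nat.card (G29 ⊓ fixer e4 ⊓ fixer e1 ⊓ fixer e2 ⊓ fixer e3 : Subgroup _) * 2 := by
  rw [chain (G29 ⊓ fixer e4 ⊓ fixer e1 ⊓ fixer e2) e3 [e3, -e3].toFinset]
  · congr 1
  · intro g hg
    obtain ⟨w, hw, e⟩ := stab_image hg.1.1.1 hg.1.1.2 e3 (by simp)
    have a1 := image_ne e hg.1.2 (by decide)
    have a2 := image_ne e (smul_neg' g _ _ hg.1.2) (by decide)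
    have a3 := image_ne e hg.2 (by decide)
    have a4 := image_ne e (smul_neg' g _ _ hg.2) (by decide)
    refine ⟨w, ?_, e⟩
    simp only [List.mem_toFinset, List.mem_cons, List.not_mem_nil, or_false] at hw ⊢
    tauto
  · have hw : ∀ w ∈ [e3, -e3].toFinset,
        ∃ l ∈ [[], dw],
          wact l e4 = e4 ∧ wact l e1 = e1 ∧ wact l e2 = e2 ∧ wact l e3 = w := by decide +kernel
    intro w h
    obtain ⟨l, -, h4, h1, h2, h3⟩ := hw w h
    exact ⟨wgen l, ⟨⟨⟨wgen_mem l, word_fix l _ basis_mem.2.2.2.1 h4⟩,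
      word_fix l _ basis_mem.1 h1⟩, word_fix l _ basis_mem.2.1 h2⟩,
      by rw [(wgen_act l _ basis_mem.2.2.1).2, h3]⟩

theorem card5 : Nat.card
    (G29 ⊓ fixer e4 ⊓ fixer e1 ⊓ fixer e2 ⊓ fixer e3 : Subgroup _) = 1 := by
  rw [Subgroup.card_eq_one, eq_bot_iff]
  rintro g ⟨⟨⟨⟨-, h4⟩, h1⟩, h2⟩, h3⟩
  rw [Subgroup.mem_bot]
  change (g : Matrix (Fin 4) (Fin 4) ℂ) *ᵥ toC _ = toC _ at h1 h2 h3 h4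
  ext i j
  replace h1 := congrFun h1 i
  replace h2 := congrFun h2 i
  replace h3 := congrFun h3 i
  replace h4 := congrFun h4 i
  simp [toC, gc, e1, e2, e3, e4, Matrix.mulVec, dotProduct, Fin.sum_univ_four] at h1 h2 h3 h4
  fin_cases j <;> fin_cases i <;> simp_all

end G29Proof

/-- The group `G₂₉` has order `7680`. -/
theorem stmt_11 : Nat.card G29 = 7680 := by
  rw [G29Proof.card1, G29Proof.card2, G29Proof.card3, G29Proof.card4, G29Proof.card5]
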